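/- There exist real parameters a, b, c with 0 < a < 1, c > 0 and 0 < b < c·√(1 − a²) such that the Abel equation (E) has two distinct 2π-periodic solutions y₁, y₂ with yᵢ(x) > 0 for all x, each of which is isolated among 2π-periodic solutions. Hence the upper bound of two limit cycles of the second kind for the Josephson equation is sharp. -/

import Mathlib

open Real

/-- `y` is a 2π-periodic solution of the Abel equation
`y′ = (b + c·cos x)·y² + (sin x − a)·y³`. -/
def IsAbelPeriodicSolution (a b c : ℝ) (y : ℝ → ℝ) : Prop :=
  (∀ x : ℝ, HasDerivAt y
    ((b + c * Real.cos x) * (y x) ^ 2 + (Real.sin x - a) * (y x) ^ 3) x) ∧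
  (∀ x : ℝ, y (x + 2 * Real.pi) = y x)

/-- `y` is isolated among 2π-periodic solutions of the Abel equation
(i.e. it is a limit cycle). -/
def IsAbelLimitCycle (a b c : ℝ) (y : ℝ → ℝ) : Prop :=
  IsAbelPeriodicSolution a b c y ∧
  ∃ ε > 0, ∀ z : ℝ → ℝ, IsAbelPeriodicSolution a b c z → |z 0 - y 0| < ε → z = y

/-!
For large `c`, substitute `u = (c * y)⁻¹ + sin t`. The Abel equation with coefficients `a`, `b / c`,
`c` becomes `u' = c⁻² * ((a - sin t) / (u - sin t) - b)`, a `2π`-periodic equation with a small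
parameter. By first-order averaging, every simple zero `k > 1` of the averaged field
`∫ t in 0..2 * π, ((a - sin t) / (k - sin t) - b) = 2 * π * (1 - b - (k - a) / √(k ^ 2 - 1))`
gives, for large `c`, exactly one `2π`-periodic `u` starting near `k`: after division by the small
parameter, the displacement map is close to the averaged field, and its nonlinear part has a small
Lipschitz constant, so the inverse function theorem applies. Uniqueness near `k` is isolation.
For `a = 5 / 7`, `b = 2 / 7` the averaged field has the two simple zeros `5 / 4` and `5 / 3`.
-/

open Set Filter Function Metric
open scoped Topology NNReal

lemma eq_of_periodic_of_eqOn_Icc {α : Type*} {f g : ℝ → α} {T : ℝ} (hT : 0 < T)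
    (hf : Periodic f T) (hg : Periodic g T) (h : EqOn f g (Icc 0 T)) : f = g := by
  have hfg : Periodic (fun t ↦ (f t, g t)) T := fun t ↦ Prod.ext (hf t) (hg t)
  funext t
  obtain ⟨s, hs, hts⟩ := hfg.exists_mem_Ico₀ hT t
  obtain ⟨hft, hgt⟩ := Prod.mk_inj.1 hts
  rw [hft, hgt, h (Ico_subset_Icc_self hs)]

section IntegralCurve

variable {E : Type*} [NormedAddCommGroup E] [NormedSpace ℝ E] {v : ℝ → E → E} {T : ℝ}

lemma exists_periodic_isIntegralCurve_eqOn {γ : ℝ → E} (hT : 0 < T) (hv : Periodic v T)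
    (hγ : IsIntegralCurveOn γ v (Icc 0 T)) (hγT : γ T = γ 0) :
    ∃ Γ : ℝ → E, IsIntegralCurve Γ v ∧ Periodic Γ T ∧ EqOn Γ γ (Icc 0 T) := by
  set Γ : ℝ → E := fun t ↦ γ (toIcoMod hT 0 t)
  have hΓ : Periodic Γ T := fun t ↦ by simp [Γ]
  have hΓγ : EqOn Γ γ (Icc 0 T) := by
    rintro t ⟨ht₀, htT⟩
    rcases htT.eq_or_lt with rfl | htT
    · simpa [Γ, hγT] using congrArg γ (toIcoMod_apply_right hT 0)
    · exact congrArg γ ((toIcoMod_eq_self hT).2 ⟨ht₀, by rwa [zero_add]⟩)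
  have hright : IsIntegralCurveOn Γ v (Icc 0 T) := fun t ht ↦ by
    simpa only [hΓγ ht] using (hγ t ht).congr_of_mem hΓγ ht
  have hleft : IsIntegralCurveOn Γ v (Icc (-T) 0) := by
    simpa [Function.comp_def, hΓ _, hv _] using hright.comp_add T
  have hderiv_periodic : Periodic (fun t ↦ HasDerivAt Γ (v t (Γ t)) t) T := fun t ↦ by
    simp only [hΓ t, hv t]
    exact propext ⟨fun h ↦ by simpa only [hΓ _] using h.comp_add_const t T,
      fun h ↦ by
        have h' := HasDerivAt.comp_sub_const (t + T) T (by simpa using h)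
        rwa [show (fun s ↦ Γ (s - T)) = Γ from funext fun _ ↦ hΓ.sub_eq _] at h'⟩
  refine ⟨Γ, fun t ↦ ?_, hΓ, hΓγ⟩
  obtain ⟨s, ⟨hs₀, hsT⟩, hts⟩ := hderiv_periodic.exists_mem_Ico₀ hT t
  refine hts.mpr ?_
  rcases hs₀.eq_or_lt with rfl | hs₀
  · have h := (hleft 0 ⟨by linarith, le_rfl⟩).union (hright 0 ⟨le_rfl, hT.le⟩)
    rw [Icc_union_Icc_eq_Icc (by linarith) hT.le] at h
    exact h.hasDerivAt (Icc_mem_nhds (by linarith) hT)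
  · exact (hright s ⟨hs₀.le, hsT.le⟩).hasDerivAt (Icc_mem_nhds hs₀ hsT)

lemma hasDerivWithinAt_Ici_of_isIntegralCurveOn_Icc {γ : ℝ → E} {a b t : ℝ}
    (hγ : IsIntegralCurveOn γ v (Icc a b)) (ht : t ∈ Ico a b) :
    HasDerivWithinAt γ (v t (γ t)) (Ici t) t :=
  (hγ t (Ico_subset_Icc_self ht)).mono_of_mem_nhdsWithin (Icc_mem_nhdsGE_of_mem ht)

lemma dist_le_mul_exp_of_isIntegralCurveOn {γ₁ γ₂ : ℝ → E} {s : Set E} {K : ℝ≥0}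
    (hv : ∀ t ∈ Icc 0 T, LipschitzOnWith K (v t) s)
    (hγ₁ : IsIntegralCurveOn γ₁ v (Icc 0 T)) (hs₁ : MapsTo γ₁ (Icc 0 T) s)
    (hγ₂ : IsIntegralCurveOn γ₂ v (Icc 0 T)) (hs₂ : MapsTo γ₂ (Icc 0 T) s) :
    ∀ t ∈ Icc 0 T, dist (γ₁ t) (γ₂ t) ≤ dist (γ₁ 0) (γ₂ 0) * exp (K * t) := fun t ht ↦ by
  simpa using dist_le_of_trajectories_ODE_of_mem
    (fun t ht ↦ hv t (Ico_subset_Icc_self ht))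
    hγ₁.continuousOn (fun _ ↦ hasDerivWithinAt_Ici_of_isIntegralCurveOn_Icc hγ₁)
    (fun t ht ↦ hs₁ (Ico_subset_Icc_self ht))
    hγ₂.continuousOn (fun _ ↦ hasDerivWithinAt_Ici_of_isIntegralCurveOn_Icc hγ₂)
    (fun t ht ↦ hs₂ (Ico_subset_Icc_self ht)) le_rfl t ht

lemma dist_le_mul_of_isIntegralCurveOn_of_norm_lt {γ : ℝ → E} {M : ℝ≥0} {r : ℝ}
    (hv : ∀ t ∈ Icc 0 T, ∀ x ∈ closedBall (γ 0) r, ‖v t x‖ < M) (hMT : M * T ≤ r)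
    (hγ : IsIntegralCurveOn γ v (Icc 0 T)) :
    ∀ t ∈ Icc 0 T, dist (γ t) (γ 0) ≤ M * t := fun t ht ↦ by
  rw [dist_eq_norm]
  refine image_norm_le_of_norm_deriv_right_lt_deriv_boundary (B := fun t ↦ M * t)
    (f := fun t ↦ γ t - γ 0) (hγ.continuousOn.sub continuousOn_const)
    (fun s hs ↦ (hasDerivWithinAt_Ici_of_isIntegralCurveOn_Icc hγ hs).sub_const _) (by simp)
    (fun s ↦ by simpa using (hasDerivAt_id s).const_mul (M : ℝ)) (fun s hs hsB ↦ ?_) ht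
  refine hv s (Ico_subset_Icc_self hs) _ ?_
  rw [mem_closedBall, dist_eq_norm, hsB]
  exact (mul_le_mul_of_nonneg_left hs.2.le M.2).trans hMT

lemma norm_sub_sub_integral_le [CompleteSpace E] {γ γ' h : ℝ → E} {C : ℝ} (hT : 0 ≤ T)
    (hγ : ∀ t ∈ Icc 0 T, HasDerivWithinAt γ (γ' t) (Icc 0 T) t) (hh : Continuous h)
    (hC : ∀ t ∈ Icc 0 T, ‖γ' t - h t‖ ≤ C) :
    ‖γ T - γ 0 - ∫ t in 0..T, h t‖ ≤ C * T := by
  have hderiv (t : ℝ) (ht : t ∈ Icc 0 T) :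
      HasDerivWithinAt (fun t ↦ γ t - ∫ s in 0..t, h s) (γ' t - h t) (Icc 0 T) t :=
    (hγ t ht).sub (hh.integral_hasStrictDerivAt 0 t).hasDerivAt.hasDerivWithinAt
  have hle := (convex_Icc 0 T).norm_image_sub_le_of_norm_hasDerivWithin_le hderiv hC
    (left_mem_Icc.2 hT) (right_mem_Icc.2 hT)
  simpa [sub_right_comm, abs_of_nonneg hT] using hle

end IntegralCurve

section Averaging

variable {E : Type*} [NormedAddCommGroup E] [NormedSpace ℝ E]
  {f : ℝ → E → E} {A : ℝ → E →L[ℝ] E} {k : E} {T r δ : ℝ} {M K ε : ℝ≥0}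

lemma lipschitzOnWith_of_approximatesLinearOn {g : E → E} {L : E →L[ℝ] E} {s : Set E}
    (hg : ApproximatesLinearOn g L s ε) (hL : ‖L‖₊ ≤ K) : LipschitzOnWith (K + ε) g s :=
  (lipschitzOnWith_iff_restrict.2 hg.lipschitz).weaken (by gcongr)

/-- Uniform control, for times in `[0, T]`, of a time-dependent vector field `f` on the closed ball
of radius `r` about `k`: it is bounded by `M`, and up to slope `ε` it is affine with linear part
`A t`, where `‖A t‖ ≤ K`. -/
structure HasLinearControlOn (f : ℝ → E → E) (A : ℝ → E →L[ℝ] E) (k : E) (T r : ℝ)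
    (M K ε : ℝ≥0) : Prop where
  continuous : ∀ x ∈ closedBall k r, Continuous (f · x)
  continuous_linearPart : Continuous A
  norm_lt : ∀ t ∈ Icc 0 T, ∀ x ∈ closedBall k r, ‖f t x‖ < M
  approximatesLinearOn : ∀ t ∈ Icc 0 T, ApproximatesLinearOn (f t) (A t) (closedBall k r) ε
  norm_linearPart_le : ∀ t ∈ Icc 0 T, ‖A t‖₊ ≤ K

/-- The slope, relative to `δ`, up to which the displacement map over `[0, T]` of `δ • f` is affine
with linear part `δ • ∫ t in 0..T, A t`, when `f` is controlled by `A`, `K` and `ε`. -/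
noncomputable def averagingSlope (K ε : ℝ≥0) (T δ : ℝ) : ℝ :=
  (ε + K * (δ * (K + ε) * T)) * exp (δ * (K + ε) * T) * T

lemma tendsto_averagingSlope (K ε : ℝ≥0) (T : ℝ) :
    Tendsto (averagingSlope K ε T) (𝓝 0) (𝓝 (ε * T)) := by
  have hcont : Continuous (averagingSlope K ε T) := by
    unfold averagingSlope
    fun_prop
  simpa [averagingSlope] using hcont.tendsto 0

namespace HasLinearControlOn

lemma mono {r' : ℝ} (h : HasLinearControlOn f A k T r M K ε) (hr : r' ≤ r) :
    HasLinearControlOn f A k T r' M K ε where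
  continuous x hx := h.continuous x (closedBall_subset_closedBall hr hx)
  continuous_linearPart := h.continuous_linearPart
  norm_lt t ht x hx := h.norm_lt t ht x (closedBall_subset_closedBall hr hx)
  approximatesLinearOn t ht :=
    (h.approximatesLinearOn t ht).mono_set (closedBall_subset_closedBall hr)
  norm_linearPart_le := h.norm_linearPart_le

lemma lipschitzOnWith {t : ℝ} (h : HasLinearControlOn f A k T r M K ε) (ht : t ∈ Icc 0 T) :
    LipschitzOnWith (K + ε) (f t) (closedBall k r) :=
  lipschitzOnWith_of_approximatesLinearOn (h.approximatesLinearOn t ht)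
    (h.norm_linearPart_le t ht)

lemma lipschitzOnWith_smul {t : ℝ} (h : HasLinearControlOn f A k T r M K ε)
    (ht : t ∈ Icc 0 T) (δ : ℝ) :
    LipschitzOnWith (‖δ‖₊ * (K + ε)) ((δ • f) t) (closedBall k r) :=
  (lipschitzWith_smul δ).comp_lipschitzOnWith (h.lipschitzOnWith ht)

lemma norm_smul_lt {t : ℝ} {x : E} (h : HasLinearControlOn f A k T r M K ε) (hδ : 0 < δ)
    (ht : t ∈ Icc 0 T) (hx : x ∈ closedBall k r) : ‖(δ • f) t x‖ < ‖δ‖₊ * M := by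
  simp only [Pi.smul_apply, norm_smul, coe_nnnorm]
  have := h.norm_lt t ht x hx
  gcongr
  simpa using hδ.ne'

lemma dist_le_of_isIntegralCurveOn {γ : ℝ → E} (h : HasLinearControlOn f A k T (2 * r) M K ε)
    (hδ : 0 < δ) (hr : δ * M * T ≤ r) (hγ₀ : γ 0 ∈ closedBall k r)
    (hγ : IsIntegralCurveOn γ (δ • f) (Icc 0 T)) :
    ∀ t ∈ Icc 0 T, dist (γ t) (γ 0) ≤ δ * M * t := by
  have hball : closedBall (γ 0) r ⊆ closedBall k (2 * r) :=
    closedBall_subset_closedBall' (by linarith [mem_closedBall.1 hγ₀])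
  simpa [abs_of_pos hδ] using dist_le_mul_of_isIntegralCurveOn_of_norm_lt (M := ‖δ‖₊ * M)
    (fun t ht x hx ↦ by simpa using h.norm_smul_lt hδ ht (hball hx))
    (by simpa [abs_of_pos hδ] using hr) hγ

lemma mapsTo_of_isIntegralCurveOn {γ : ℝ → E} (h : HasLinearControlOn f A k T (2 * r) M K ε)
    (hδ : 0 < δ) (hr : δ * M * T ≤ r) (hγ₀ : γ 0 ∈ closedBall k r)
    (hγ : IsIntegralCurveOn γ (δ • f) (Icc 0 T)) :
    MapsTo γ (Icc 0 T) (closedBall k (2 * r)) := fun t ht ↦ by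
  have hdrift := h.dist_le_of_isIntegralCurveOn hδ hr hγ₀ hγ t ht
  have hδM : δ * M * t ≤ δ * M * T := by gcongr; exact ht.2
  rw [mem_closedBall] at hγ₀ ⊢
  linarith [dist_triangle (γ t) (γ 0) k]

lemma exists_isIntegralCurveOn [CompleteSpace E] (h : HasLinearControlOn f A k T (2 * r) M K ε)
    (hδ : 0 < δ) (hT : 0 ≤ T) (hr : δ * M * T ≤ r) {x : E} (hx : x ∈ closedBall k r) :
    ∃ γ : ℝ → E, γ 0 = x ∧ IsIntegralCurveOn γ (δ • f) (Icc 0 T) := by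
  have hr₀ : 0 ≤ r := dist_nonneg.trans hx
  have hball : closedBall x r ⊆ closedBall k (2 * r) :=
    closedBall_subset_closedBall' (by linarith [mem_closedBall.1 hx])
  have hpl : IsPicardLindelof (δ • f) (⟨0, left_mem_Icc.2 hT⟩ : Icc 0 T) x ⟨r, hr₀⟩ 0
      (‖δ‖₊ * M) (‖δ‖₊ * (K + ε)) :=
    { lipschitzOnWith := fun t ht ↦ (h.lipschitzOnWith_smul ht δ).mono hball
      continuousOn := fun y hy ↦ ((h.continuous y (hball hy)).const_smul δ).continuousOn
      norm_le := fun t ht y hy ↦ by simpa using (h.norm_smul_lt hδ ht (hball hy)).le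
      mul_max_le := by
        change _ ≤ r - 0
        simpa [hT, abs_of_pos hδ] using hr }
  exact hpl.exists_eq_forall_mem_Icc_hasDerivWithinAt₀

section TwoCurves

variable {γ₁ γ₂ : ℝ → E}

lemma norm_sub_le_of_isIntegralCurveOn (h : HasLinearControlOn f A k T r M K ε) (hδ : 0 ≤ δ)
    (hγ₁ : IsIntegralCurveOn γ₁ (δ • f) (Icc 0 T)) (hs₁ : MapsTo γ₁ (Icc 0 T) (closedBall k r))
    (hγ₂ : IsIntegralCurveOn γ₂ (δ • f) (Icc 0 T)) (hs₂ : MapsTo γ₂ (Icc 0 T) (closedBall k r)) :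
    ∀ t ∈ Icc 0 T, ‖γ₁ t - γ₂ t‖ ≤ exp (δ * (K + ε) * T) * ‖γ₁ 0 - γ₂ 0‖ := fun t ht ↦ by
  have hgronwall := dist_le_mul_exp_of_isIntegralCurveOn
    (fun t ht ↦ h.lipschitzOnWith_smul ht δ) hγ₁ hs₁ hγ₂ hs₂ t ht
  have hle : ‖γ₁ t - γ₂ t‖ ≤ ‖γ₁ 0 - γ₂ 0‖ * exp (δ * (K + ε) * t) := by
    simpa [dist_eq_norm, abs_of_nonneg hδ] using hgronwall
  rw [mul_comm (exp _)]
  refine hle.trans ?_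
  gcongr
  exact ht.2

lemma norm_sub_sub_sub_le_of_isIntegralCurveOn (h : HasLinearControlOn f A k T r M K ε)
    (hδ : 0 ≤ δ)
    (hγ₁ : IsIntegralCurveOn γ₁ (δ • f) (Icc 0 T)) (hs₁ : MapsTo γ₁ (Icc 0 T) (closedBall k r))
    (hγ₂ : IsIntegralCurveOn γ₂ (δ • f) (Icc 0 T)) (hs₂ : MapsTo γ₂ (Icc 0 T) (closedBall k r)) :
    ∀ t ∈ Icc 0 T, ‖(γ₁ t - γ₂ t) - (γ₁ 0 - γ₂ 0)‖ ≤
      δ * (K + ε) * T * exp (δ * (K + ε) * T) * ‖γ₁ 0 - γ₂ 0‖ := fun t ht ↦ by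
  have hderiv_le : ∀ s ∈ Icc 0 T, ‖(δ • f) s (γ₁ s) - (δ • f) s (γ₂ s)‖ ≤
      δ * (K + ε) * (exp (δ * (K + ε) * T) * ‖γ₁ 0 - γ₂ 0‖) := fun s hs ↦ by
    have hlip := (h.lipschitzOnWith_smul hs δ).dist_le_mul _ (hs₁ hs) _ (hs₂ hs)
    rw [dist_eq_norm, dist_eq_norm] at hlip
    refine hlip.trans ?_
    simp only [NNReal.coe_mul, NNReal.coe_add, coe_nnnorm, norm_of_nonneg hδ]
    gcongr
    exact h.norm_sub_le_of_isIntegralCurveOn hδ hγ₁ hs₁ hγ₂ hs₂ s hs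
  have h₀ : (0 : ℝ) ∈ Icc 0 T := left_mem_Icc.2 (ht.1.trans ht.2)
  calc ‖(γ₁ t - γ₂ t) - (γ₁ 0 - γ₂ 0)‖
      ≤ δ * (K + ε) * (exp (δ * (K + ε) * T) * ‖γ₁ 0 - γ₂ 0‖) * ‖t - 0‖ :=
        (convex_Icc 0 T).norm_image_sub_le_of_norm_hasDerivWithin_le
          (fun s hs ↦ (hγ₁ s hs).sub (hγ₂ s hs)) hderiv_le h₀ ht
    _ ≤ δ * (K + ε) * (exp (δ * (K + ε) * T) * ‖γ₁ 0 - γ₂ 0‖) * T := by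
        rw [sub_zero, norm_of_nonneg ht.1]
        gcongr
        exact ht.2
    _ = _ := by ring

lemma norm_displacement_sub_sub_integral_le [CompleteSpace E]
    (h : HasLinearControlOn f A k T r M K ε) (hδ : 0 ≤ δ) (hT : 0 ≤ T)
    (hγ₁ : IsIntegralCurveOn γ₁ (δ • f) (Icc 0 T)) (hs₁ : MapsTo γ₁ (Icc 0 T) (closedBall k r))
    (hγ₂ : IsIntegralCurveOn γ₂ (δ • f) (Icc 0 T)) (hs₂ : MapsTo γ₂ (Icc 0 T) (closedBall k r)) :
    ‖(γ₁ T - γ₁ 0) - (γ₂ T - γ₂ 0) - δ • (∫ t in 0..T, A t) (γ₁ 0 - γ₂ 0)‖ ≤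
      δ * (averagingSlope K ε T δ * ‖γ₁ 0 - γ₂ 0‖) := by
  set e := exp (δ * (K + ε) * T)
  set w : ℝ → E := fun t ↦ γ₁ t - γ₂ t
  have hderiv_le : ∀ t ∈ Icc 0 T, ‖((δ • f) t (γ₁ t) - (δ • f) t (γ₂ t)) - δ • A t (w 0)‖ ≤
      δ * ((ε + K * (δ * (K + ε) * T)) * e * ‖w 0‖) := fun t ht ↦ by
    have happrox : ‖f t (γ₁ t) - f t (γ₂ t) - A t (w t)‖ ≤ ε * (e * ‖w 0‖) :=
      (h.approximatesLinearOn t ht _ (hs₁ ht) _ (hs₂ ht)).trans <| by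
        gcongr
        exact h.norm_sub_le_of_isIntegralCurveOn hδ hγ₁ hs₁ hγ₂ hs₂ t ht
    have hlinear : ‖A t (w t - w 0)‖ ≤ K * (δ * (K + ε) * T * e * ‖w 0‖) :=
      (A t).le_of_opNorm_le_of_le (h.norm_linearPart_le t ht)
        (h.norm_sub_sub_sub_le_of_isIntegralCurveOn hδ hγ₁ hs₁ hγ₂ hs₂ t ht)
    calc ‖((δ • f) t (γ₁ t) - (δ • f) t (γ₂ t)) - δ • A t (w 0)‖
        = δ * ‖(f t (γ₁ t) - f t (γ₂ t) - A t (w t)) + A t (w t - w 0)‖ := by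
          rw [(A t).map_sub (w t), sub_add_sub_cancel, Pi.smul_apply, Pi.smul_apply,
            Pi.smul_apply, ← smul_sub, ← smul_sub, norm_smul, norm_of_nonneg hδ]
      _ ≤ δ * (ε * (e * ‖w 0‖) + K * (δ * (K + ε) * T * e * ‖w 0‖)) := by
          gcongr
          exact norm_add_le_of_le happrox hlinear
      _ = _ := by ring
  have hA := h.continuous_linearPart
  have hle := norm_sub_sub_integral_le (h := fun t ↦ δ • A t (w 0)) hT
    (fun t ht ↦ (hγ₁ t ht).sub (hγ₂ t ht)) (by fun_prop) hderiv_le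
  rw [intervalIntegral.integral_smul,
    ← ContinuousLinearMap.intervalIntegral_apply (hA.intervalIntegrable 0 T)] at hle
  calc _ = ‖(w T - w 0) - δ • (∫ t in 0..T, A t) (w 0)‖ := by simp only [w, sub_sub_sub_comm]
    _ ≤ _ := hle
    _ = _ := by rw [averagingSlope]; ring

end TwoCurves

lemma norm_displacement_sub_integral_le [CompleteSpace E] {γ : ℝ → E}
    (h : HasLinearControlOn f A k T (2 * r) M K ε) (hδ : 0 < δ) (hT : 0 ≤ T) (hr₀ : 0 ≤ r)
    (hr : δ * M * T ≤ r) (hγ₀ : γ 0 = k) (hγ : IsIntegralCurveOn γ (δ • f) (Icc 0 T)) :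
    ‖γ T - k - δ • ∫ t in 0..T, f t k‖ ≤ δ * (δ * ((K + ε) * M * T ^ 2)) := by
  have hk : γ 0 ∈ closedBall k r := by simpa [hγ₀] using hr₀
  have hk' : k ∈ closedBall k (2 * r) := mem_closedBall_self (by positivity)
  have hderiv_le : ∀ t ∈ Icc 0 T, ‖(δ • f) t (γ t) - δ • f t k‖ ≤
      δ * ((K + ε) * (δ * M * T)) := fun t ht ↦ by
    have hlip := (h.lipschitzOnWith_smul ht δ).dist_le_mul _
      (h.mapsTo_of_isIntegralCurveOn hδ hr hk hγ ht) k hk'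
    have hdrift := hγ₀ ▸ h.dist_le_of_isIntegralCurveOn hδ hr hk hγ t ht
    simp only [NNReal.coe_mul, NNReal.coe_add, coe_nnnorm, norm_of_nonneg hδ.le] at hlip
    calc _ ≤ δ * (K + ε) * dist (γ t) k := by simpa [dist_eq_norm] using hlip
      _ ≤ δ * (K + ε) * (δ * M * t) := by gcongr
      _ ≤ δ * (K + ε) * (δ * M * T) := by gcongr; exact ht.2
      _ = _ := by ring
  have hle := norm_sub_sub_integral_le (h := fun t ↦ δ • f t k) hT hγ
    ((h.continuous k hk').const_smul δ) hderiv_le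
  rw [intervalIntegral.integral_smul, hγ₀] at hle
  exact hle.trans_eq (by ring)

section Equiv

variable [CompleteSpace E] {Q : E ≃L[ℝ] E} {c : ℝ≥0}

lemma eqOn_of_isIntegralCurveOn_of_apply_eq {γ₁ γ₂ : ℝ → E}
    (h : HasLinearControlOn f A k T (2 * r) M K ε) (hQ : Q = ∫ t in 0..T, A t) (hδ : 0 < δ)
    (hT : 0 ≤ T) (hr : δ * M * T ≤ r) (hc : ‖(Q.symm : E →L[ℝ] E)‖ * c < 1)
    (hslope : averagingSlope K ε T δ ≤ c)
    (hγ₁ : IsIntegralCurveOn γ₁ (δ • f) (Icc 0 T)) (hγ₁₀ : γ₁ 0 ∈ closedBall k r)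
    (hγ₁T : γ₁ T = γ₁ 0)
    (hγ₂ : IsIntegralCurveOn γ₂ (δ • f) (Icc 0 T)) (hγ₂₀ : γ₂ 0 ∈ closedBall k r)
    (hγ₂T : γ₂ T = γ₂ 0) : EqOn γ₁ γ₂ (Icc 0 T) := fun t ht ↦ by
  have hs₁ := h.mapsTo_of_isIntegralCurveOn hδ hr hγ₁₀ hγ₁
  have hs₂ := h.mapsTo_of_isIntegralCurveOn hδ hr hγ₂₀ hγ₂
  have hQ_le : ‖Q (γ₁ 0 - γ₂ 0)‖ ≤ c * ‖γ₁ 0 - γ₂ 0‖ := by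
    have hle := h.norm_displacement_sub_sub_integral_le hδ.le hT hγ₁ hs₁ hγ₂ hs₂
    rw [← hQ, hγ₁T, hγ₂T, sub_self, sub_self, sub_self, zero_sub, norm_neg, norm_smul,
      norm_of_nonneg hδ.le, mul_le_mul_iff_right₀ hδ] at hle
    exact hle.trans (by gcongr)
  have hle_Q : ‖γ₁ 0 - γ₂ 0‖ ≤ ‖(Q.symm : E →L[ℝ] E)‖ * ‖Q (γ₁ 0 - γ₂ 0)‖ := by
    simpa using (Q.symm : E →L[ℝ] E).le_opNorm (Q (γ₁ 0 - γ₂ 0))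
  have hinit : ‖γ₁ 0 - γ₂ 0‖ = 0 := by
    by_contra hne
    have hpos := (norm_nonneg _).lt_of_ne' hne
    refine (hle_Q.trans (mul_le_mul_of_nonneg_left hQ_le (norm_nonneg _))).not_gt ?_
    rw [← mul_assoc]
    exact mul_lt_of_lt_one_left hpos hc
  have hle := h.norm_sub_le_of_isIntegralCurveOn hδ.le hγ₁ hs₁ hγ₂ hs₂ t ht
  rw [hinit, mul_zero] at hle
  exact sub_eq_zero.1 (norm_le_zero_iff.1 hle)

lemma exists_isIntegralCurveOn_apply_eq
    (h : HasLinearControlOn f A k T (2 * r) M K ε) (hQ : Q = ∫ t in 0..T, A t)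
    (hzero : ∫ t in 0..T, f t k = 0) (hδ : 0 < δ) (hT : 0 ≤ T) (hr₀ : 0 ≤ r)
    (hr : δ * M * T ≤ r) (hslope : averagingSlope K ε T δ ≤ c)
    (hsmall : δ * ((K + ε) * M * T ^ 2) ≤ (‖(Q.symm : E →L[ℝ] E)‖⁻¹ - c) * (r / 2)) :
    ∃ γ : ℝ → E, γ 0 ∈ closedBall k (r / 2) ∧ γ T = γ 0 ∧
      IsIntegralCurveOn γ (δ • f) (Icc 0 T) := by
  choose! α hα₀ hα using
    fun x (hx : x ∈ closedBall k r) ↦ h.exists_isIntegralCurveOn hδ hT hr hx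
  have hk : k ∈ closedBall k r := mem_closedBall_self hr₀
  have hsmap (x : E) (hx : x ∈ closedBall k r) : MapsTo (α x) (Icc 0 T) (closedBall k (2 * r)) :=
    h.mapsTo_of_isIntegralCurveOn hδ hr ((hα₀ x hx).symm ▸ hx) (hα x hx)
  set D : E → E := fun x ↦ δ⁻¹ • (α x T - x)
  have hD : ApproximatesLinearOn D (Q : E →L[ℝ] E) (closedBall k r) c := fun x hx y hy ↦ by
    have hle := h.norm_displacement_sub_sub_integral_le hδ.le hT (hα x hx) (hsmap x hx) (hα y hy)
      (hsmap y hy)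
    rw [← hQ, hα₀ x hx, hα₀ y hy] at hle
    calc ‖D x - D y - Q (x - y)‖
        = δ⁻¹ * ‖(α x T - x) - (α y T - y) - δ • Q (x - y)‖ := by
          rw [← norm_of_nonneg (inv_nonneg.2 hδ.le), ← norm_smul, smul_sub, smul_sub,
            inv_smul_smul₀ hδ.ne']
      _ ≤ δ⁻¹ * (δ * (averagingSlope K ε T δ * ‖x - y‖)) := by gcongr; exact hle
      _ = averagingSlope K ε T δ * ‖x - y‖ := inv_mul_cancel_left₀ hδ.ne' _
      _ ≤ c * ‖x - y‖ := by gcongr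
  have hDk : ‖D k‖ ≤ δ * ((K + ε) * M * T ^ 2) := by
    have hle := h.norm_displacement_sub_integral_le hδ hT hr₀ hr (hα₀ k hk) (hα k hk)
    rw [hzero, smul_zero, sub_zero] at hle
    rw [norm_smul, norm_inv, norm_of_nonneg hδ.le]
    exact (inv_mul_le_iff₀ hδ).2 hle
  obtain ⟨x, hx, hDx⟩ := hD.surjOn_closedBall_of_nonlinearRightInverse
    Q.toNonlinearRightInverse (by positivity) (closedBall_subset_closedBall (half_le_self hr₀))
    (show 0 ∈ _ by rw [mem_closedBall, dist_zero_left]; exact hDk.trans hsmall)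
  have hxr := closedBall_subset_closedBall (half_le_self hr₀) hx
  refine ⟨α x, (hα₀ x hxr).symm ▸ hx, ?_, hα x hxr⟩
  rw [hα₀ x hxr]
  exact sub_eq_zero.1 ((smul_eq_zero_iff_right (inv_ne_zero hδ.ne')).1 hDx)

lemma exists_unique_periodic_isIntegralCurve
    (h : HasLinearControlOn f A k T (2 * r) M K ε) (hQ : Q = ∫ t in 0..T, A t)
    (hfT : Periodic f T) (hzero : ∫ t in 0..T, f t k = 0) (hδ : 0 < δ) (hT : 0 < T)
    (hr : δ * M * T < r / 2) (hc : ‖(Q.symm : E →L[ℝ] E)‖ * c < 1)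
    (hslope : averagingSlope K ε T δ ≤ c)
    (hsmall : δ * ((K + ε) * M * T ^ 2) ≤ (‖(Q.symm : E →L[ℝ] E)‖⁻¹ - c) * (r / 2)) :
    ∃ u : ℝ → E, IsIntegralCurve u (δ • f) ∧ Periodic u T ∧ (∀ t, u t ∈ ball k r) ∧
      ∀ v : ℝ → E, IsIntegralCurve v (δ • f) → Periodic v T → v 0 ∈ ball k r → v = u := by
  have hr₀ : 0 < r := by linarith [show 0 ≤ δ * M * T by positivity]
  have hr' : δ * M * T ≤ r := by linarith
  obtain ⟨γ, hγ₀, hγT, hγ⟩ :=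
    h.exists_isIntegralCurveOn_apply_eq hQ hzero hδ hT.le hr₀.le hr' hslope hsmall
  have hγ₀' := closedBall_subset_closedBall (half_le_self hr₀.le) hγ₀
  obtain ⟨u, hu, huT, huγ⟩ := exists_periodic_isIntegralCurve_eqOn hT
    (fun t ↦ by simp only [Pi.smul_apply, hfT t]) hγ hγT
  refine ⟨u, hu, huT, fun t ↦ ?_, fun v hv hvT hv₀ ↦ ?_⟩
  · obtain ⟨s, hs, hts⟩ := huT.exists_mem_Ico₀ hT t
    rw [hts, huγ (Ico_subset_Icc_self hs), mem_ball]
    have hdrift := h.dist_le_of_isIntegralCurveOn hδ hr' hγ₀' hγ s (Ico_subset_Icc_self hs)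
    have hδM : δ * M * s ≤ δ * M * T := by gcongr; exact hs.2.le
    linarith [dist_triangle (γ s) (γ 0) k, mem_closedBall.1 hγ₀]
  · refine eq_of_periodic_of_eqOn_Icc hT hvT huT (EqOn.trans ?_ huγ.symm)
    exact h.eqOn_of_isIntegralCurveOn_of_apply_eq hQ hδ hT.le hr' hc hslope
      (hv.isIntegralCurveOn _) (ball_subset_closedBall hv₀) hvT.eq hγ hγ₀' hγT

end Equiv

end HasLinearControlOn

lemma exists_hasLinearControlOn {f' : ℝ → E → E →L[ℝ] E}
    (hf : ∀ᶠ x in 𝓝 k, Continuous (f · x))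
    (hf' : ∀ᶠ x in 𝓝 k, ∀ t, HasFDerivAt (f t) (f' t x) x)
    (hcont : ∀ t, ContinuousAt (uncurry f') (t, k)) (T : ℝ) (hε : 0 < ε) :
    ∃ R > 0, ∃ M K, HasLinearControlOn f (f' · k) k T R M K ε := by
  have hA : Continuous (f' · k) := continuous_iff_continuousAt.2 fun t ↦
    (hcont t).comp (f := fun t ↦ (t, k)) (by fun_prop)
  have hnear : ∀ᶠ x in 𝓝 k, ∀ t ∈ Icc 0 T, ‖f' t x - f' t k‖ < ε := by
    refine isCompact_Icc.eventually_forall_of_forall_eventually fun t _ ↦ ?_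
    have hdiff : ContinuousAt (fun p : E × ℝ ↦ ‖f' p.2 p.1 - f' p.2 k‖) (k, t) :=
      (((hcont t).comp (f := Prod.swap) (x := (k, t)) continuous_swap.continuousAt).sub
        (hA.comp continuous_snd).continuousAt).norm
    exact hdiff.eventually_lt_const (by simpa using hε)
  obtain ⟨R, hR, hball⟩ := nhds_basis_closedBall.eventually_iff.1 (hf.and (hf'.and hnear))
  obtain ⟨K, hK⟩ := isCompact_Icc.exists_bound_of_continuousOn (hA.continuousOn (s := Icc 0 T))
  obtain ⟨M, hM⟩ := isCompact_Icc.exists_bound_of_continuousOn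
    (hf.self_of_nhds.continuousOn (s := Icc 0 T))
  have happrox (t : ℝ) (ht : t ∈ Icc 0 T) :
      ApproximatesLinearOn (f t) (f' t k) (closedBall k R) ε := fun x hx y hy ↦
    (convex_closedBall k R).norm_image_sub_le_of_norm_hasFDerivWithin_le'
      (fun z hz ↦ ((hball hz).2.1 t).hasFDerivWithinAt) (fun z hz ↦ ((hball hz).2.2 t ht).le) hy hx
  have hKT (t : ℝ) (ht : t ∈ Icc 0 T) : ‖f' t k‖₊ ≤ K.toNNReal :=
    NNReal.coe_le_coe.1 ((hK t ht).trans (le_coe_toNNReal K))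
  refine ⟨R, hR, M.toNNReal + (K.toNNReal + ε) * R.toNNReal + 1, K.toNNReal,
    fun x hx ↦ (hball hx).1, hA, fun t ht x hx ↦ ?_, happrox, hKT⟩
  have hlip : LipschitzOnWith (K.toNNReal + ε) (f t) (closedBall k R) :=
    lipschitzOnWith_of_approximatesLinearOn (happrox t ht) (hKT t ht)
  have hle := hlip.dist_le_mul x hx k (mem_closedBall_self hR.le)
  calc ‖f t x‖ ≤ ‖f t k‖ + ‖f t x - f t k‖ := norm_le_norm_add_norm_sub' _ _
    _ ≤ M.toNNReal + ↑(K.toNNReal + ε) * dist x k := by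
        rw [dist_eq_norm] at hle
        exact add_le_add ((hM t ht).trans (le_coe_toNNReal M)) hle
    _ ≤ M.toNNReal + ↑(K.toNNReal + ε) * R.toNNReal := by
        gcongr
        exact hx.trans (le_coe_toNNReal R)
    _ < _ := by push_cast; exact lt_add_one _

theorem eventually_exists_unique_periodic_isIntegralCurve_smul [CompleteSpace E] [Nontrivial E]
    {f' : ℝ → E → E →L[ℝ] E} (hT : 0 < T) (hfT : Periodic f T)
    (hf : ∀ᶠ x in 𝓝 k, Continuous (f · x))
    (hf' : ∀ᶠ x in 𝓝 k, ∀ t, HasFDerivAt (f t) (f' t x) x)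
    (hcont : ∀ t, ContinuousAt (uncurry f') (t, k)) (hzero : ∫ t in 0..T, f t k = 0)
    (hinv : (∫ t in 0..T, f' t k).IsInvertible) :
    ∀ᶠ r in 𝓝[>] (0 : ℝ), ∀ᶠ δ in 𝓝[>] (0 : ℝ), ∃ u : ℝ → E,
      IsIntegralCurve u (δ • f) ∧ Periodic u T ∧ (∀ t, u t ∈ ball k r) ∧
      ∀ v : ℝ → E, IsIntegralCurve v (δ • f) → Periodic v T → v 0 ∈ ball k r → v = u := by
  obtain ⟨Q, hQ⟩ := hinv
  have hQpos : 0 < ‖(Q.symm : E →L[ℝ] E)‖ := Q.norm_symm_pos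
  obtain ⟨c, hc₀, hc⟩ := exists_between (inv_pos.2 Q.nnnorm_symm_pos)
  replace hc : c < ‖(Q.symm : E →L[ℝ] E)‖⁻¹ := by exact_mod_cast hc
  obtain ⟨ε, hε, hεT⟩ := exists_between (div_pos hc₀ (toNNReal_pos.2 hT))
  obtain ⟨R, hR, M, K, h⟩ := exists_hasLinearControlOn hf hf' hcont T hε
  have hεT' : ε * T < c := by
    simpa [hT.le] using NNReal.coe_lt_coe.2 ((lt_div_iff₀ (toNNReal_pos.2 hT)).1 hεT)
  have hsmall (C : ℝ) {η : ℝ} (hη : 0 < η) : ∀ᶠ δ in 𝓝[>] (0 : ℝ), δ * C < η :=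
    nhdsWithin_le_nhds <| ((continuous_mul_const C).tendsto 0).eventually_lt_const (by simpa)
  filter_upwards [Ioo_mem_nhdsGT (half_pos hR)] with r ⟨hr₀, hrR⟩
  have hgap : 0 < (‖(Q.symm : E →L[ℝ] E)‖⁻¹ - c) * (r / 2) :=
    mul_pos (sub_pos.2 hc) (half_pos hr₀)
  filter_upwards [self_mem_nhdsWithin, hsmall (M * T) (half_pos hr₀),
    hsmall ((K + ε) * M * T ^ 2) hgap, nhdsWithin_le_nhds
      ((tendsto_averagingSlope K ε T).eventually_lt_const hεT')] with δ hδ hdrift hdisp hslope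
  exact (h.mono (by linarith)).exists_unique_periodic_isIntegralCurve hQ hfT hzero hδ hT
    (by rwa [mul_assoc]) ((lt_inv_mul_iff₀ hQpos).1 (by rwa [mul_one])) hslope.le hdisp.le

lemma isInvertible_of_apply_one_ne_zero {L : ℝ →L[ℝ] ℝ} (hL : L 1 ≠ 0) : L.IsInvertible :=
  ⟨ContinuousLinearEquiv.unitsEquivAut ℝ (Units.mk0 _ hL), by ext; simp⟩

theorem eventually_exists_unique_periodic_isIntegralCurve_smul_of_hasDerivAt
    {f f' : ℝ → ℝ → ℝ} {k T : ℝ} (hT : 0 < T) (hfT : Periodic f T)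
    (hf : ∀ᶠ x in 𝓝 k, Continuous (f · x))
    (hf' : ∀ᶠ x in 𝓝 k, ∀ t, HasDerivAt (f t) (f' t x) x)
    (hcont : ∀ t, ContinuousAt (uncurry f') (t, k)) (hzero : ∫ t in 0..T, f t k = 0)
    (hsimple : ∫ t in 0..T, f' t k ≠ 0) :
    ∀ᶠ r in 𝓝[>] (0 : ℝ), ∀ᶠ δ in 𝓝[>] (0 : ℝ), ∃ u : ℝ → ℝ,
      IsIntegralCurve u (δ • f) ∧ Periodic u T ∧ (∀ t, u t ∈ ball k r) ∧
      ∀ v : ℝ → ℝ, IsIntegralCurve v (δ • f) → Periodic v T → v 0 ∈ ball k r → v = u := by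
  have hspan : Continuous (ContinuousLinearMap.toSpanSingleton ℝ : ℝ → ℝ →L[ℝ] ℝ) :=
    (ContinuousLinearMap.toSpanSingletonCLE (𝕜 := ℝ) (E := ℝ)).continuous
  have hspan_f' : Continuous fun t ↦ ContinuousLinearMap.toSpanSingleton ℝ (f' t k) :=
    continuous_iff_continuousAt.2 fun t ↦ hspan.continuousAt.comp <|
      (hcont t).comp (f := fun t ↦ (t, k)) (by fun_prop)
  refine eventually_exists_unique_periodic_isIntegralCurve_smul
    (f' := fun t x ↦ ContinuousLinearMap.toSpanSingleton ℝ (f' t x)) hT hfT hf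
    (hf'.mono fun x hx t ↦ (hx t).hasFDerivAt) (fun t ↦ hspan.continuousAt.comp (hcont t)) hzero
    (isInvertible_of_apply_one_ne_zero ?_)
  rw [ContinuousLinearMap.intervalIntegral_apply (hspan_f'.intervalIntegrable 0 T)]
  simpa using hsimple

end Averaging

section AbelEquation

variable {a b c : ℝ} {y : ℝ → ℝ}

lemma eq_mul_exp_integral_of_hasDerivAt {g : ℝ → ℝ} (hg : Continuous g)
    (hy : ∀ x, HasDerivAt y (g x * y x) x) (x : ℝ) : y x = y 0 * exp (∫ t in 0..x, g t) := by
  have hconst (t : ℝ) : HasDerivAt (fun x ↦ y x * exp (-∫ s in 0..x, g s)) 0 t :=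
    ((hy t).mul (hg.integral_hasStrictDerivAt 0 t).hasDerivAt.neg.exp).congr_deriv (by ring)
  have h := is_const_of_deriv_eq_zero (fun t ↦ (hconst t).differentiableAt)
    (fun t ↦ (hconst t).deriv) x 0
  simp only [intervalIntegral.integral_same, neg_zero, exp_zero, mul_one] at h
  rw [← h, mul_assoc, ← exp_add, neg_add_cancel, exp_zero, mul_one]

lemma IsAbelPeriodicSolution.ne_zero (hy : IsAbelPeriodicSolution a b c y) (hy₀ : y 0 ≠ 0)
    (x : ℝ) : y x ≠ 0 := by
  have hcont : Continuous y := continuous_iff_continuousAt.2 fun x ↦ (hy.1 x).continuousAt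
  rw [eq_mul_exp_integral_of_hasDerivAt
    (g := fun x ↦ (b + c * cos x) * y x + (sin x - a) * y x ^ 2) (by fun_prop)
    (fun x ↦ (hy.1 x).congr_deriv (by ring)) x]
  exact mul_ne_zero hy₀ (exp_ne_zero _)

/-- The vector field whose multiple by `(c ^ 2)⁻¹` governs `u = (c * y)⁻¹ + sin` when `y` solves the
Abel equation with coefficients `a`, `b / c`, `c`. -/
noncomputable def reciprocalAbelField (a b t u : ℝ) : ℝ :=
  (a - sin t) / (u - sin t) - b

lemma periodic_reciprocalAbelField (a b : ℝ) : Periodic (reciprocalAbelField a b) (2 * π) :=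
  fun t ↦ by
    funext u
    simp only [reciprocalAbelField, sin_add_two_pi]

lemma hasDerivAt_reciprocalAbelField (a b : ℝ) {t u : ℝ} (hu : u - sin t ≠ 0) :
    HasDerivAt (reciprocalAbelField a b t) (-((a - sin t) / (u - sin t) ^ 2)) u := by
  have h := (((hasDerivAt_id u).sub_const (sin t)).inv hu).const_mul (a - sin t)
  exact (h.sub_const b).congr_deriv (by simp only [id]; ring)

lemma isAbelPeriodicSolution_inv_mul_sub_sin {u : ℝ → ℝ} (hc : c ≠ 0)
    (hu : IsIntegralCurve u ((c ^ 2)⁻¹ • reciprocalAbelField a b)) (huT : Periodic u (2 * π))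
    (hne : ∀ t, u t - sin t ≠ 0) :
    IsAbelPeriodicSolution a (b / c) c fun t ↦ (c * (u t - sin t))⁻¹ := by
  refine ⟨fun t ↦ ?_, fun t ↦ by simp only [huT t, sin_add_two_pi]⟩
  have h := (((hu t).sub (hasDerivAt_sin t)).const_mul c).inv (mul_ne_zero hc (hne t))
  refine h.congr_deriv ?_
  have := hne t
  simp only [Pi.smul_apply, smul_eq_mul, reciprocalAbelField, Pi.sub_apply]
  field_simp
  ring

lemma IsAbelPeriodicSolution.isIntegralCurve_inv_add_sin (hc : c ≠ 0)
    (hy : IsAbelPeriodicSolution a (b / c) c y) (hne : ∀ t, y t ≠ 0) :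
    IsIntegralCurve (fun t ↦ (c * y t)⁻¹ + sin t) ((c ^ 2)⁻¹ • reciprocalAbelField a b) :=
  fun t ↦ by
    have h := (((hy.1 t).const_mul c).inv (mul_ne_zero hc (hne t))).add (hasDerivAt_sin t)
    refine h.congr_deriv ?_
    have := hne t
    simp only [Pi.smul_apply, smul_eq_mul, reciprocalAbelField, add_sub_cancel_right]
    field_simp
    ring

lemma isAbelLimitCycle_inv_mul_sub_sin {u : ℝ → ℝ} {k r : ℝ} (hc : c ≠ 0)
    (hu : IsIntegralCurve u ((c ^ 2)⁻¹ • reciprocalAbelField a b)) (huT : Periodic u (2 * π))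
    (hne : ∀ t, u t - sin t ≠ 0) (hu₀ : u 0 ∈ ball k r)
    (huniq : ∀ v, IsIntegralCurve v ((c ^ 2)⁻¹ • reciprocalAbelField a b) →
      Periodic v (2 * π) → v 0 ∈ ball k r → v = u) :
    IsAbelLimitCycle a (b / c) c fun t ↦ (c * (u t - sin t))⁻¹ := by
  refine ⟨isAbelPeriodicSolution_inv_mul_sub_sin hc hu huT hne, ?_⟩
  set y₀ := (c * (u 0 - sin 0))⁻¹
  have hy₀ : y₀ ≠ 0 := inv_ne_zero (mul_ne_zero hc (hne 0))
  have hcont : ContinuousAt (fun s ↦ (c * s)⁻¹) y₀ :=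
    ContinuousAt.inv₀ (by fun_prop) (mul_ne_zero hc hy₀)
  have hu₀' : (c * y₀)⁻¹ = u 0 := by
    simp only [y₀, mul_inv, inv_inv, sin_zero, sub_zero, inv_mul_cancel_left₀ hc]
  have hnear : ∀ᶠ s in 𝓝 y₀, s ≠ 0 ∧ (c * s)⁻¹ ∈ ball k r :=
    (eventually_ne_nhds hy₀).and (hcont.eventually_mem (isOpen_ball.mem_nhds (hu₀'.symm ▸ hu₀)))
  obtain ⟨ε, hε, hball⟩ := Metric.eventually_nhds_iff.1 hnear
  refine ⟨ε, hε, fun z hz hz₀ ↦ ?_⟩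
  obtain ⟨hne₀, hz_mem⟩ := hball hz₀
  have hvu : (fun t ↦ (c * z t)⁻¹ + sin t) = u :=
    huniq _ (hz.isIntegralCurve_inv_add_sin hc (hz.ne_zero hne₀))
      (fun t ↦ by simp only [hz.2 t, sin_add_two_pi]) (by simpa using hz_mem)
  funext t
  simp only [← hvu, add_sub_cancel_right, mul_inv, inv_inv, inv_mul_cancel_left₀ hc]

end AbelEquation

section Integrals

variable {k : ℝ}

lemma sub_sin_pos (hk : 1 < k) (t : ℝ) : 0 < k - sin t :=
  sub_pos.2 ((sin_le_one t).trans_lt hk)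

lemma continuous_inv_sub_sin (hk : 1 < k) : Continuous fun t ↦ (k - sin t)⁻¹ :=
  Continuous.inv₀ (by fun_prop) fun t ↦ (sub_sin_pos hk t).ne'

-- With `p = k + s`, this is the usual antiderivative `2 / s * arctan ((k * tan (t / 2) - 1) / s)`
-- with its jumps at the odd multiples of `π` removed, up to a constant.
lemma hasDerivAt_sub_arctan_div_sub_sin {s : ℝ} (hs : 0 < s) (hks : s ^ 2 = k ^ 2 - 1)
    (hk : 1 < k) (t : ℝ) :
    HasDerivAt (fun t ↦ s⁻¹ * (t - 2 * arctan (cos t / (k + s - sin t)))) (k - sin t)⁻¹ t := by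
  have hk' := (sub_sin_pos hk t).ne'
  have hp := (sub_sin_pos (k := k + s) (by linarith) t).ne'
  have hp₀ : k + s ≠ 0 := by linarith
  have harctan : 1 + (cos t / (k + s - sin t)) ^ 2 =
      2 * (k + s) * (k - sin t) / (k + s - sin t) ^ 2 := by
    field_simp
    linear_combination sin_sq_add_cos_sq t + hks
  have h := (((hasDerivAt_id t).sub (((hasDerivAt_cos t).div
    ((hasDerivAt_sin t).const_sub (k + s)) hp).arctan.const_mul 2)).const_mul s⁻¹)
  refine h.congr_deriv ?_
  simp only [Pi.div_apply, harctan]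
  field_simp
  linear_combination -sin_sq_add_cos_sq t - hks

lemma integral_inv_sub_sin (hk : 1 < k) :
    ∫ t in 0..2 * π, (k - sin t)⁻¹ = 2 * π / √(k ^ 2 - 1) := by
  have hk2 : 0 < k ^ 2 - 1 := by nlinarith
  rw [intervalIntegral.integral_eq_sub_of_hasDerivAt
    (fun t _ ↦ hasDerivAt_sub_arctan_div_sub_sin (sqrt_pos.2 hk2) (sq_sqrt hk2.le) hk t)
    ((continuous_inv_sub_sin hk).intervalIntegrable _ _)]
  simp only [cos_two_pi, sin_two_pi, cos_zero, sin_zero]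
  ring

lemma integral_reciprocalAbelField (a b : ℝ) (hk : 1 < k) :
    ∫ t in 0..2 * π, reciprocalAbelField a b t k =
      2 * π * (1 - b - (k - a) / √(k ^ 2 - 1)) := by
  have heq (t : ℝ) : reciprocalAbelField a b t k = (1 - b) - (k - a) * (k - sin t)⁻¹ := by
    have := (sub_sin_pos hk t).ne'
    unfold reciprocalAbelField
    field_simp
    ring
  simp only [heq]
  rw [intervalIntegral.integral_sub (by simp)
      (((continuous_inv_sub_sin hk).intervalIntegrable _ _).const_mul _),
    intervalIntegral.integral_const_mul, integral_inv_sub_sin hk, intervalIntegral.integral_const]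
  simp only [sub_zero, smul_eq_mul]
  ring

lemma integral_one_sub_mul_sin_div_sub_sin_sq (hk : 1 < k) :
    ∫ t in 0..2 * π, (1 - k * sin t) * (k - sin t)⁻¹ ^ 2 = 0 := by
  have hinv := continuous_inv_sub_sin hk
  have hderiv (t : ℝ) : HasDerivAt (fun t ↦ cos t / (k - sin t))
      ((1 - k * sin t) * (k - sin t)⁻¹ ^ 2) t := by
    refine ((hasDerivAt_cos t).div ((hasDerivAt_sin t).const_sub k)
      (sub_sin_pos hk t).ne').congr_deriv ?_
    rw [inv_pow, ← div_eq_mul_inv]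
    congr 1
    linear_combination sin_sq_add_cos_sq t
  rw [intervalIntegral.integral_eq_sub_of_hasDerivAt (fun t _ ↦ hderiv t)
    (Continuous.intervalIntegrable (by fun_prop) _ _)]
  simp

lemma integral_sub_sin_div_sub_sin_sq_ne_zero {a : ℝ} (hk : 1 < k) (hak : a * k ≠ 1) :
    ∫ t in 0..2 * π, (a - sin t) / (k - sin t) ^ 2 ≠ 0 := by
  have hinv := continuous_inv_sub_sin hk
  have heq (t : ℝ) : (a - sin t) / (k - sin t) ^ 2 = k⁻¹ *
      ((a * k - 1) * (k - sin t)⁻¹ ^ 2 + (1 - k * sin t) * (k - sin t)⁻¹ ^ 2) := by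
    have := (sub_sin_pos hk t).ne'
    field_simp
    ring
  simp only [heq]
  rw [intervalIntegral.integral_const_mul, intervalIntegral.integral_add
      (Continuous.intervalIntegrable (by fun_prop) _ _)
      (Continuous.intervalIntegrable (by fun_prop) _ _),
    integral_one_sub_mul_sin_div_sub_sin_sq hk, add_zero, intervalIntegral.integral_const_mul]
  have hpos : 0 < ∫ t in 0..2 * π, (k - sin t)⁻¹ ^ 2 :=
    intervalIntegral.intervalIntegral_pos_of_pos (Continuous.intervalIntegrable (by fun_prop) _ _)
      (fun t ↦ pow_pos (inv_pos.2 (sub_sin_pos hk t)) 2) two_pi_pos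
  exact mul_ne_zero (inv_ne_zero (by linarith)) (mul_ne_zero (sub_ne_zero.2 hak) hpos.ne')

end Integrals

section Main

variable {a b k : ℝ}

lemma eventually_exists_unique_periodic_reciprocalAbelField (hk : 1 < k)
    (hzero : k - a = (1 - b) * √(k ^ 2 - 1)) (hsimple : a * k ≠ 1) :
    ∀ᶠ r in 𝓝[>] (0 : ℝ), ∀ᶠ δ in 𝓝[>] (0 : ℝ), ∃ u : ℝ → ℝ,
      IsIntegralCurve u (δ • reciprocalAbelField a b) ∧ Periodic u (2 * π) ∧
      (∀ t, u t ∈ ball k r) ∧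
      ∀ v : ℝ → ℝ, IsIntegralCurve v (δ • reciprocalAbelField a b) → Periodic v (2 * π) →
        v 0 ∈ ball k r → v = u := by
  have hsqrt : √(k ^ 2 - 1) ≠ 0 := (sqrt_pos.2 (by nlinarith)).ne'
  refine eventually_exists_unique_periodic_isIntegralCurve_smul_of_hasDerivAt
    (f' := fun t u ↦ -((a - sin t) / (u - sin t) ^ 2)) two_pi_pos
    (periodic_reciprocalAbelField a b) ?_ ?_ (fun t ↦ ?_) ?_ ?_
  · filter_upwards [eventually_gt_nhds hk] with u hu
    exact ((by fun_prop : Continuous fun t ↦ a - sin t).div (by fun_prop)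
      fun t ↦ (sub_sin_pos hu t).ne').sub continuous_const
  · filter_upwards [eventually_gt_nhds hk] with u hu t
    exact hasDerivAt_reciprocalAbelField a b (sub_sin_pos hu t).ne'
  · have hne : (k - sin t) ^ 2 ≠ 0 := pow_ne_zero 2 (sub_sin_pos hk t).ne'
    exact (ContinuousAt.div (f := fun p : ℝ × ℝ ↦ a - sin p.1)
      (g := fun p : ℝ × ℝ ↦ (p.2 - sin p.1) ^ 2) (by fun_prop) (by fun_prop) hne).neg
  · rw [integral_reciprocalAbelField a b hk, hzero, mul_div_cancel_right₀ _ hsqrt, sub_self,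
      mul_zero]
  · rw [intervalIntegral.integral_neg]
    exact neg_ne_zero.2 (integral_sub_sin_div_sub_sin_sq_ne_zero hk hsimple)

theorem eventually_exists_isAbelLimitCycle_near (hk : 1 < k)
    (hzero : k - a = (1 - b) * √(k ^ 2 - 1)) (hsimple : a * k ≠ 1) :
    ∀ᶠ r in 𝓝[>] (0 : ℝ), ∀ᶠ c in atTop, ∃ y : ℝ → ℝ,
      IsAbelLimitCycle a (b / c) c y ∧ (∀ x, 0 < y x) ∧ (c * y 0)⁻¹ ∈ ball k r := by
  have hscale : Tendsto (fun c : ℝ ↦ (c ^ 2)⁻¹) atTop (𝓝[>] 0) :=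
    tendsto_inv_atTop_nhdsGT_zero.comp (tendsto_pow_atTop two_ne_zero)
  filter_upwards [eventually_exists_unique_periodic_reciprocalAbelField hk hzero hsimple,
    Ioo_mem_nhdsGT (sub_pos.2 hk)] with r hr hrk
  filter_upwards [hscale.eventually hr, eventually_gt_atTop 0]
    with c ⟨u, hu, huT, hur, huniq⟩ hc
  have hpos (t : ℝ) : 0 < u t - sin t := by
    refine sub_sin_pos ?_ t
    linarith [(Real.ball_eq_Ioo k r ▸ hur t).1, hrk.2]
  refine ⟨fun t ↦ (c * (u t - sin t))⁻¹, ?_, fun t ↦ inv_pos.2 (mul_pos hc (hpos t)), ?_⟩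
  · exact isAbelLimitCycle_inv_mul_sub_sin hc.ne' hu huT (fun t ↦ (hpos t).ne') (hur 0) huniq
  · simpa only [mul_inv, inv_inv, sin_zero, sub_zero, inv_mul_cancel_left₀ hc.ne'] using hur 0

end Main

/-- Sharpness of the bound: there are parameters `0 < a < 1`, `c > 0`,
`0 < b < c·√(1 − a²)` for which the Abel equation has two distinct everywhere
positive limit cycles, so the Josephson equation can have exactly two limit
cycles of the second kind. -/
theorem abel_two_positive_limit_cycles_exist :
    ∃ a b c : ℝ, 0 < a ∧ a < 1 ∧ 0 < c ∧ 0 < b ∧ b < c * Real.sqrt (1 - a ^ 2) ∧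
      ∃ y₁ y₂ : ℝ → ℝ, y₁ ≠ y₂ ∧
        IsAbelLimitCycle a b c y₁ ∧ (∀ x : ℝ, 0 < y₁ x) ∧
        IsAbelLimitCycle a b c y₂ ∧ (∀ x : ℝ, 0 < y₂ x) := by
  have hnear₁ := eventually_exists_isAbelLimitCycle_near (a := 5 / 7) (b := 2 / 7) (k := 5 / 4)
    (by norm_num) (by rw [show √((5 / 4) ^ 2 - 1) = 3 / 4 by norm_num]; norm_num) (by norm_num)
  have hnear₂ := eventually_exists_isAbelLimitCycle_near (a := 5 / 7) (b := 2 / 7) (k := 5 / 3)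
    (by norm_num) (by rw [show √((5 / 3) ^ 2 - 1) = 4 / 3 by norm_num]; norm_num) (by norm_num)
  obtain ⟨r, hr₁, hr₂, -, hr⟩ :=
    (hnear₁.and (hnear₂.and (Ioo_mem_nhdsGT (by norm_num : (0 : ℝ) < 1 / 10)))).exists
  obtain ⟨c, ⟨y₁, hy₁, hpos₁, hk₁⟩, ⟨y₂, hy₂, hpos₂, hk₂⟩, hc⟩ :=
    (hr₁.and (hr₂.and (eventually_ge_atTop 1))).exists
  refine ⟨5 / 7, 2 / 7 / c, c, by norm_num, by norm_num, by linarith, by positivity, ?_,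
    y₁, y₂, ?_, hy₁, hpos₁, hy₂, hpos₂⟩
  · have hsqrt : 2 / 7 < √(1 - (5 / 7) ^ 2) := lt_sqrt_of_sq_lt (by norm_num)
    calc 2 / 7 / c ≤ 2 / 7 := div_le_self (by norm_num) hc
      _ < √(1 - (5 / 7) ^ 2) := hsqrt
      _ ≤ c * √(1 - (5 / 7) ^ 2) := le_mul_of_one_le_left (sqrt_nonneg _) hc
  · rintro rfl
    rw [Real.ball_eq_Ioo] at hk₁ hk₂
    linarith [hk₁.2, hk₂.1]
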